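/- Let a > √3, Δt > 0, λ > 0, and τ > 0. Let M_L⁻, M_L⁺, M_R⁻, M_R⁺ ∈ ℝ⁵ each be of two-node Gaussian-EQMOM form (positive weights, σ > 0), with interface speeds δ_L±, δ_R± and HLL fluxes F̂_L, F̂_R as in the HLL construction, and cell average M̄ = ½(M_L⁺ + M_R⁻). Set ρ = M̄₀, U = M̄₁/M̄₀, θ = M̄₂/M̄₀ − U² (note that θ > 0 holds automatically here), and let G = ρ·(1, U, U² + θ, U³ + 3Uθ, U⁴ + 6U²θ + 3θ²) be the Maxwellian moment vector. Define the semi-implicit update M_new by (1 + Δt/τ) M_new = M̄ − λ(F̂_R − F̂_L) + (Δt/τ) G. If λ(δ_L⁺ − δ_L⁻) ≤ ½ and λ(δ_R⁺ − δ_R⁻) ≤ ½, then H₂(M_new) is positive definite. -/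

import Mathlib

open MeasureTheory Real

/-- The `k`-th moment `Δ_k(v, s²)` of the normal distribution with mean `v` and variance `s²`. -/
noncomputable def gaussMoment (v s : ℝ) (k : ℕ) : ℝ :=
  ∫ x : ℝ, x ^ k * ((2 * π * s ^ 2) ^ (-(1 : ℝ) / 2) * Real.exp (-(x - v) ^ 2 / (2 * s ^ 2)))

/-- The `3×3` Hankel matrix `H₂(c)` of a vector `c ∈ ℝ⁵`, with `(j,k)` entry `c_{j+k}`. -/
noncomputable def hankel2 (c : Fin 5 → ℝ) : Matrix (Fin 3) (Fin 3) ℝ :=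
  Matrix.of fun j k => c ⟨j.1 + k.1, by have := j.isLt; have := k.isLt; omega⟩

/-- Parameters of a two-node Gaussian-EQMOM state: positive weights and positive `σ`. -/
structure EqmomParams where
  r1 : ℝ
  r2 : ℝ
  v1 : ℝ
  v2 : ℝ
  sig : ℝ
  hr1 : 0 < r1
  hr2 : 0 < r2
  hsig : 0 < sig

/-- Moment vector `M_k = ρ₁Δ_k(v₁,σ²) + ρ₂Δ_k(v₂,σ²)`, `k = 0,…,4`. -/
noncomputable def EqmomParams.M (W : EqmomParams) : Fin 5 → ℝ :=
  fun k => W.r1 * gaussMoment W.v1 W.sig k.1 + W.r2 * gaussMoment W.v2 W.sig k.1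

/-- Flux vector `F(M) = (M₁,…,M₄,M₅)` with `M₅ = ρ₁Δ₅(v₁,σ²) + ρ₂Δ₅(v₂,σ²)`. -/
noncomputable def EqmomParams.F (W : EqmomParams) : Fin 5 → ℝ :=
  fun k => W.r1 * gaussMoment W.v1 W.sig (k.1 + 1) + W.r2 * gaussMoment W.v2 W.sig (k.1 + 1)

/-- Wave speed `δ⁺(M) = max{v₁+aσ, v₂+aσ, 0}`. -/
noncomputable def EqmomParams.dp (W : EqmomParams) (a : ℝ) : ℝ :=
  max (max (W.v1 + a * W.sig) (W.v2 + a * W.sig)) 0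

/-- Wave speed `δ⁻(M) = min{v₁−aσ, v₂−aσ, 0}`. -/
noncomputable def EqmomParams.dm (W : EqmomParams) (a : ℝ) : ℝ :=
  min (min (W.v1 - a * W.sig) (W.v2 - a * W.sig)) 0

/-- HLL numerical flux
`F̂(M⁻,M⁺) = (δ̂⁺F(M⁻) − δ̂⁻F(M⁺) + δ̂⁺δ̂⁻(M⁺ − M⁻))/(δ̂⁺ − δ̂⁻)`. -/
noncomputable def hllFlux (dp dm : ℝ) (Mm Mp Fm Fp : Fin 5 → ℝ) : Fin 5 → ℝ :=
  fun k => (dp * Fm k - dm * Fp k + dp * dm * (Mp k - Mm k)) / (dp - dm)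

/-- Maxwellian moment vector `G = ρ(1, U, U²+θ, U³+3Uθ, U⁴+6U²θ+3θ²)`. -/
noncomputable def maxwellMoments (ρ U θ : ℝ) : Fin 5 → ℝ :=
  ![ρ, ρ * U, ρ * (U ^ 2 + θ), ρ * (U ^ 3 + 3 * U * θ),
    ρ * (U ^ 4 + 6 * U ^ 2 * θ + 3 * θ ^ 2)]


lemma gm_density (v s : ℝ) (hs : 0 < s) (x : ℝ) :
    (2 * π * s ^ 2) ^ (-(1 : ℝ) / 2) * Real.exp (-(x - v) ^ 2 / (2 * s ^ 2))
      = ProbabilityTheory.gaussianPDFReal v (Real.toNNReal (s ^ 2)) x := by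
  rw [ProbabilityTheory.gaussianPDFReal, Real.coe_toNNReal _ (by positivity)]
  congr 1
  rw [Real.sqrt_eq_rpow, ← Real.rpow_neg (by positivity)]
  norm_num

lemma gm_var_ne (s : ℝ) (hs : 0 < s) : Real.toNNReal (s ^ 2) ≠ 0 := by
  have : 0 < s ^ 2 := by positivity
  simpa using hs.ne'

lemma gm_integrable (v s : ℝ) (hs : 0 < s) (k : ℕ) :
    Integrable (fun x : ℝ => x ^ k * ProbabilityTheory.gaussianPDFReal v (Real.toNNReal (s ^ 2)) x) := by
  have h1 : MemLp id (k : ENNReal)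
      (ProbabilityTheory.gaussianReal v (Real.toNNReal (s ^ 2))) :=
    ProbabilityTheory.memLp_id_gaussianReal' _ (by simp)
  have h2 : Integrable (fun x : ℝ => x ^ k)
      (ProbabilityTheory.gaussianReal v (Real.toNNReal (s ^ 2))) := by
    have h3 := h1.integrable_norm_pow'
    refine h3.mono' (by fun_prop) (Filter.Eventually.of_forall fun x => ?_)
    simp
  rw [ProbabilityTheory.gaussianReal_of_var_ne_zero _ (gm_var_ne s hs),
    integrable_withDensity_iff_integrable_smul' (ProbabilityTheory.measurable_gaussianPDF _ _)
      (Filter.Eventually.of_forall fun x => ProbabilityTheory.gaussianPDF_lt_top)] at h2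
  refine h2.congr (Filter.Eventually.of_forall fun x => ?_)
  simp [ProbabilityTheory.toReal_gaussianPDF, mul_comm]

lemma gm_eq (v s : ℝ) (hs : 0 < s) (k : ℕ) : gaussMoment v s k =
    ∫ x : ℝ, x ^ k * ProbabilityTheory.gaussianPDFReal v (Real.toNNReal (s ^ 2)) x := by
  unfold gaussMoment
  simp_rw [gm_density v s hs]

lemma gm_hasDeriv (v s : ℝ) (hs : 0 < s) (x : ℝ) :
    HasDerivAt (ProbabilityTheory.gaussianPDFReal v (Real.toNNReal (s ^ 2)))
      (-(x - v) / s ^ 2 * ProbabilityTheory.gaussianPDFReal v (Real.toNNReal (s ^ 2)) x) x := by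
  have e : ProbabilityTheory.gaussianPDFReal v (Real.toNNReal (s ^ 2)) = fun x =>
    (2 * π * s ^ 2) ^ (-(1 : ℝ) / 2) * Real.exp (-(x - v) ^ 2 / (2 * s ^ 2)) :=
    funext fun x => (gm_density v s hs x).symm
  rw [e]
  have h1 : HasDerivAt (fun x : ℝ => -(x - v) ^ 2 / (2 * s ^ 2)) (-(x - v) / s ^ 2) x := by
    have := ((((hasDerivAt_id x).sub_const v).pow 2).neg).div_const (2 * s ^ 2)
    refine this.congr_deriv ?_
    simp
    field_simp
    ring
  refine (h1.exp.const_mul ((2 * π * s ^ 2) ^ (-(1 : ℝ) / 2))).congr_deriv ?_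
  ring

lemma gm_zero (v s : ℝ) (hs : 0 < s) : gaussMoment v s 0 = 1 := by
  rw [gm_eq v s hs]
  simpa using ProbabilityTheory.integral_gaussianPDFReal_eq_one v (gm_var_ne s hs)

lemma gm_rec (v s : ℝ) (hs : 0 < s) (k : ℕ) :
    gaussMoment v s (k + 1) = v * gaussMoment v s k + k * s ^ 2 * gaussMoment v s (k - 1) := by
  simp only [gm_eq v s hs]
  set g := ProbabilityTheory.gaussianPDFReal v (Real.toNNReal (s ^ 2)) with hg
  have i := gm_integrable v s hs
  rw [← hg] at i
  have hd : ∀ x, HasDerivAt (fun x : ℝ => x ^ k * g x)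
      (k * (x ^ (k - 1) * g x) + (v / s ^ 2 * (x ^ k * g x) - 1 / s ^ 2 * (x ^ (k + 1) * g x))) x := by
    intro x
    refine ((hasDerivAt_pow k x).mul (gm_hasDeriv v s hs x)).congr_deriv ?_
    simp only [← hg]
    ring
  have h0 := integral_eq_zero_of_hasDerivAt_of_integrable hd
    (((i _).const_mul _).add (((i _).const_mul _).sub ((i _).const_mul _))) (i k)
  have i3 : Integrable (fun x : ℝ => v / s ^ 2 * (x ^ k * g x) - 1 / s ^ 2 * (x ^ (k + 1) * g x)) :=
    ((i _).const_mul _).sub ((i _).const_mul _)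
  rw [integral_add ((i _).const_mul _) i3,
    integral_sub ((i _).const_mul _) ((i _).const_mul _), integral_const_mul, integral_const_mul,
    integral_const_mul] at h0
  field_simp at h0
  linarith

/-- three-point Gauss-Hermite quadrature -/
lemma gm_quad (v s : ℝ) (hs : 0 < s) (k : ℕ) (hk : k ≤ 5) :
    gaussMoment v s k = 2 / 3 * v ^ k + 1 / 6 * (v + √3 * s) ^ k + 1 / 6 * (v - √3 * s) ^ k := by
  have h0 := gm_zero v s hs
  have h1 := gm_rec v s hs 0
  have h2 := gm_rec v s hs 1
  have h3 := gm_rec v s hs 2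
  have h4 := gm_rec v s hs 3
  have h5 := gm_rec v s hs 4
  norm_num at h1 h2 h3 h4 h5
  have q2 : (√3 : ℝ) ^ 2 = 3 := Real.sq_sqrt (by norm_num)
  have q4 : (√3 : ℝ) ^ 4 = 9 := by rw [show 4 = 2 * 2 from rfl, pow_mul, q2]; norm_num
  rw [h0] at h1 h2
  rw [h1] at h2 h3
  rw [h2] at h3 h4
  rw [h3] at h4 h5
  rw [h4] at h5
  interval_cases k
  · rw [h0]; norm_num
  · rw [h1]; ring
  · rw [h2]; ring_nf; rw [q2]; ring
  · rw [h3]; ring_nf; rw [q2]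
  · rw [h4]; ring_nf; rw [q2, q4]; ring
  · rw [h5]; ring_nf; rw [q2, q4]; ring

/-- quadratic form of the Hankel matrix -/
def qf (p0 p1 p2 : ℝ) (c : Fin 5 → ℝ) : ℝ :=
  p0 ^ 2 * c 0 + 2 * p0 * p1 * c 1 + (2 * p0 * p2 + p1 ^ 2) * c 2 + 2 * p1 * p2 * c 3 + p2 ^ 2 * c 4

lemma hankel_posDef_of_qf (c : Fin 5 → ℝ)
    (h : ∀ p0 p1 p2 : ℝ, (p0 ≠ 0 ∨ p1 ≠ 0 ∨ p2 ≠ 0) → 0 < qf p0 p1 p2 c) :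
    (hankel2 c).PosDef := by
  refine Matrix.PosDef.of_dotProduct_mulVec_pos ?_ ?_
  · ext i j
    simp [hankel2, add_comm]
  · intro x hx
    have := h (x 0) (x 1) (x 2) (by
      by_contra hc
      push Not at hc
      apply hx
      ext i
      fin_cases i
      · exact hc.1
      · exact hc.2.1
      · exact hc.2.2)
    refine this.trans_eq ?_
    simp [dotProduct, Matrix.mulVec, Fin.sum_univ_three, hankel2, qf]
    ring

lemma three_roots (p0 p1 p2 u t : ℝ) (ht : 0 < t) (hp : p0 ≠ 0 ∨ p1 ≠ 0 ∨ p2 ≠ 0) :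
    0 < 2 / 3 * (p0 + p1 * u + p2 * u ^ 2) ^ 2 + 1 / 6 * (p0 + p1 * (u + t) + p2 * (u + t) ^ 2) ^ 2
      + 1 / 6 * (p0 + p1 * (u - t) + p2 * (u - t) ^ 2) ^ 2 := by
  set A := p0 + p1 * u + p2 * u ^ 2 with hA
  set B := p0 + p1 * (u + t) + p2 * (u + t) ^ 2 with hB
  set C := p0 + p1 * (u - t) + p2 * (u - t) ^ 2 with hC
  by_contra hn
  have a0 : A = 0 := by nlinarith [sq_nonneg A, sq_nonneg B, sq_nonneg C]
  have b0 : B = 0 := by nlinarith [sq_nonneg A, sq_nonneg B, sq_nonneg C]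
  have c0 : C = 0 := by nlinarith [sq_nonneg A, sq_nonneg B, sq_nonneg C]
  have e2 : p2 * t ^ 2 = 0 := by linear_combination (b0 + c0) / 2 - a0 + (hB + hC) / 2 - hA
  have z2 : p2 = 0 := by
    rcases mul_eq_zero.1 e2 with h | h
    · exact h
    · exact absurd h (by positivity)
  have e1 : p1 * t = 0 := by
    linear_combination (b0 - c0) / 2 + (hB - hC) / 2 - 2 * u * t * z2
  have z1 : p1 = 0 := by
    rcases mul_eq_zero.1 e1 with h | h
    · exact h
    · exact absurd h ht.ne'
  have z0 : p0 = 0 := by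
    linear_combination a0 + hA - u * z1 - u ^ 2 * z2
  rcases hp with h | h | h <;> contradiction

/-- `qf` of `α M + β F` for an EQMOM state is nonneg if `α + β x ≥ 0` at all nodes. -/
lemma qf_nonneg (W : EqmomParams) (α β p0 p1 p2 : ℝ)
    (h1 : 0 ≤ α + β * (W.v1 + √3 * W.sig)) (h2 : 0 ≤ α + β * (W.v1 - √3 * W.sig))
    (h3 : 0 ≤ α + β * (W.v2 + √3 * W.sig)) (h4 : 0 ≤ α + β * (W.v2 - √3 * W.sig)) :
    0 ≤ qf p0 p1 p2 (fun k => α * W.M k + β * W.F k) := by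
  have hs := W.hsig
  have h5 : 0 ≤ α + β * W.v1 := by linarith
  have h6 : 0 ≤ α + β * W.v2 := by linarith
  have r1 := W.hr1
  have r2 := W.hr2
  have key : qf p0 p1 p2 (fun k => α * W.M k + β * W.F k) =
     W.r1 * (2 / 3 * ((α + β * W.v1) * (p0 + p1 * W.v1 + p2 * W.v1 ^ 2) ^ 2)
      + 1 / 6 * ((α + β * (W.v1 + √3 * W.sig)) *
        (p0 + p1 * (W.v1 + √3 * W.sig) + p2 * (W.v1 + √3 * W.sig) ^ 2) ^ 2)
      + 1 / 6 * ((α + β * (W.v1 - √3 * W.sig)) *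
        (p0 + p1 * (W.v1 - √3 * W.sig) + p2 * (W.v1 - √3 * W.sig) ^ 2) ^ 2)) +
     W.r2 * (2 / 3 * ((α + β * W.v2) * (p0 + p1 * W.v2 + p2 * W.v2 ^ 2) ^ 2)
      + 1 / 6 * ((α + β * (W.v2 + √3 * W.sig)) *
        (p0 + p1 * (W.v2 + √3 * W.sig) + p2 * (W.v2 + √3 * W.sig) ^ 2) ^ 2)
      + 1 / 6 * ((α + β * (W.v2 - √3 * W.sig)) *
        (p0 + p1 * (W.v2 - √3 * W.sig) + p2 * (W.v2 - √3 * W.sig) ^ 2) ^ 2)) := by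
    simp only [qf, EqmomParams.M, EqmomParams.F, Fin.isValue, Fin.val_zero, Fin.val_one, Fin.val_two,
      show ((3 : Fin 5) : ℕ) = 3 from rfl, show ((4 : Fin 5) : ℕ) = 4 from rfl]
    norm_num only
    simp only [gm_quad _ _ hs 0 (by norm_num), gm_quad _ _ hs 1 (by norm_num),
      gm_quad _ _ hs 2 (by norm_num), gm_quad _ _ hs 3 (by norm_num),
      gm_quad _ _ hs 4 (by norm_num), gm_quad _ _ hs 5 (by norm_num)]
    generalize W.v1 + √3 * W.sig = A1
    generalize W.v1 - √3 * W.sig = A2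
    generalize W.v2 + √3 * W.sig = A3
    generalize W.v2 - √3 * W.sig = A4
    ring
  rw [key]
  positivity

lemma qf_pos_lin (W : EqmomParams) (u : ℝ) : 0 < W.M 2 - 2 * u * W.M 1 + u ^ 2 * W.M 0 := by
  have hs := W.hsig
  have r1 := W.hr1
  have r2 := W.hr2
  have q2 : (√3 : ℝ) ^ 2 = 3 := Real.sq_sqrt (by norm_num)
  have key : W.M 2 - 2 * u * W.M 1 + u ^ 2 * W.M 0 =
      W.r1 * ((W.v1 - u) ^ 2 + W.sig ^ 2) + W.r2 * ((W.v2 - u) ^ 2 + W.sig ^ 2) := by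
    simp only [EqmomParams.M, Fin.isValue, Fin.val_zero, Fin.val_one, Fin.val_two,
      gm_quad _ _ hs 0 (by norm_num), gm_quad _ _ hs 1 (by norm_num),
      gm_quad _ _ hs 2 (by norm_num)]
    ring_nf
    rw [q2]
    ring
  rw [key]
  positivity

lemma M_zero (W : EqmomParams) : W.M 0 = W.r1 + W.r2 := by
  simp [EqmomParams.M, gm_zero _ _ W.hsig]

lemma qf_maxwell_pos (ρ U θ p0 p1 p2 : ℝ) (hρ : 0 < ρ) (hθ : 0 < θ)
    (hp : p0 ≠ 0 ∨ p1 ≠ 0 ∨ p2 ≠ 0) : 0 < qf p0 p1 p2 (maxwellMoments ρ U θ) := by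
  have h := mul_pos hρ (three_roots p0 p1 p2 U (√(3 * θ)) (by positivity) hp)
  have q2 : (√(3 * θ)) ^ 2 = 3 * θ := Real.sq_sqrt (by positivity)
  have q4 : (√(3 * θ)) ^ 4 = 9 * θ ^ 2 := by rw [show 4 = 2 * 2 from rfl, pow_mul, q2]; ring
  refine h.trans_eq ?_
  generalize √(3 * θ) = t at q2 q4
  simp only [qf, maxwellMoments]
  simp
  ring_nf
  rw [q2, q4]
  ring

lemma nodes (W : EqmomParams) (a P N : ℝ) (ha : √3 < a) (hP : W.dp a ≤ P) (hN : N ≤ W.dm a) :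
    0 ≤ P ∧ N ≤ 0 ∧ N < P ∧
    (∀ p0 p1 p2, 0 ≤ qf p0 p1 p2 (fun k => P * W.M k + (-1) * W.F k)) ∧
    (∀ p0 p1 p2, 0 ≤ qf p0 p1 p2 (fun k => (-N) * W.M k + 1 * W.F k)) ∧
    (∀ p0 p1 p2, 0 ≤ qf p0 p1 p2 (fun k => 1 * W.M k + 0 * W.F k)) := by
  have hs := W.hsig
  simp only [EqmomParams.dp, EqmomParams.dm, max_le_iff, le_min_iff] at hP hN
  obtain ⟨⟨P1, P2⟩, P3⟩ := hP
  obtain ⟨⟨N1, N2⟩, N3⟩ := hN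
  have h3 : √3 * W.sig < a * W.sig := by gcongr
  have h30 : 0 < √3 * W.sig := by positivity
  refine ⟨P3, N3, by linarith, fun _ _ _ => qf_nonneg _ _ _ _ _ _ ?_ ?_ ?_ ?_,
    fun _ _ _ => qf_nonneg _ _ _ _ _ _ ?_ ?_ ?_ ?_,
    fun _ _ _ => qf_nonneg _ _ _ _ _ _ ?_ ?_ ?_ ?_⟩ <;> linarith

/-- realizability of the semi-implicit BGK HLL finite-volume update for the
two-node Gaussian-EQMOM closure.  With `M̄ = ½(M_L⁺ + M_R⁻)`, `ρ = M̄₀`, `U = M̄₁/M̄₀`,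
`θ = M̄₂/M̄₀ − U²`, `G` the Maxwellian moment vector, and `M_new` the solution of
`(1 + Δt/τ)M_new = M̄ − λ(F̂_R − F̂_L) + (Δt/τ)G`, the CFL conditions `λ(δ⁺ − δ⁻) ≤ 1/2`
at both interfaces imply that `H₂(M_new)` is positive definite. -/
theorem eqmom_hll_bgk_semiImplicit_posDef (a Δt lam τ : ℝ)
    (ha : Real.sqrt 3 < a) (hΔt : 0 < Δt) (hlam : 0 < lam) (hτ : 0 < τ)
    (WLm WLp WRm WRp : EqmomParams)
    (dLp dLm dRp dRm : ℝ)
    (hdLp : dLp = max (WLm.dp a) (WLp.dp a))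
    (hdLm : dLm = min (WLm.dm a) (WLp.dm a))
    (hdRp : dRp = max (WRm.dp a) (WRp.dp a))
    (hdRm : dRm = min (WRm.dm a) (WRp.dm a))
    (FL FR : Fin 5 → ℝ)
    (hFL : FL = hllFlux dLp dLm WLm.M WLp.M WLm.F WLp.F)
    (hFR : FR = hllFlux dRp dRm WRm.M WRp.M WRm.F WRp.F)
    (Mbar : Fin 5 → ℝ) (hMbar : ∀ k, Mbar k = (WLp.M k + WRm.M k) / 2)
    (G : Fin 5 → ℝ)
    (hG : G = maxwellMoments (Mbar 0) (Mbar 1 / Mbar 0)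
        (Mbar 2 / Mbar 0 - (Mbar 1 / Mbar 0) ^ 2))
    (Mnew : Fin 5 → ℝ)
    (hMnew : ∀ k, (1 + Δt / τ) * Mnew k = Mbar k - lam * (FR k - FL k) + Δt / τ * G k)
    (hCFL_L : lam * (dLp - dLm) ≤ 1 / 2)
    (hCFL_R : lam * (dRp - dRm) ≤ 1 / 2) :
    (hankel2 Mnew).PosDef := by
  have hLmP : WLm.dp a ≤ dLp := hdLp ▸ le_max_left _ _
  have hLpP : WLp.dp a ≤ dLp := hdLp ▸ le_max_right _ _
  have hLmN : dLm ≤ WLm.dm a := hdLm ▸ min_le_left _ _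
  have hLpN : dLm ≤ WLp.dm a := hdLm ▸ min_le_right _ _
  have hRmP : WRm.dp a ≤ dRp := hdRp ▸ le_max_left _ _
  have hRpP : WRp.dp a ≤ dRp := hdRp ▸ le_max_right _ _
  have hRmN : dRm ≤ WRm.dm a := hdRm ▸ min_le_left _ _
  have hRpN : dRm ≤ WRp.dm a := hdRm ▸ min_le_right _ _
  obtain ⟨L0, L1, L2, -, LmF, -⟩ := nodes WLm a dLp dLm ha hLmP hLmN
  obtain ⟨-, -, -, -, LpF, LpM⟩ := nodes WLp a dLp dLm ha hLpP hLpN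
  obtain ⟨R0, R1, R2, RmF, -, RmM⟩ := nodes WRm a dRp dRm ha hRmP hRmN
  obtain ⟨-, -, -, RpF, -, -⟩ := nodes WRp a dRp dRm ha hRpP hRpN
  have hM0 : 0 < Mbar 0 := by
    rw [hMbar, M_zero, M_zero]
    have := WLp.hr1
    have := WLp.hr2
    have := WRm.hr1
    have := WRm.hr2
    linarith
  have hθ : 0 < Mbar 2 / Mbar 0 - (Mbar 1 / Mbar 0) ^ 2 := by
    set U := Mbar 1 / Mbar 0 with hU
    have e1 : Mbar 1 = U * Mbar 0 := by rw [hU]; field_simp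
    have := qf_pos_lin WLp U
    have := qf_pos_lin WRm U
    have hh : 0 < Mbar 2 - 2 * U * Mbar 1 + U ^ 2 * Mbar 0 := by
      rw [hMbar 0, hMbar 1, hMbar 2]; linarith
    rw [e1] at hh
    have : Mbar 2 / Mbar 0 - U ^ 2 = (Mbar 2 - 2 * U * (U * Mbar 0) + U ^ 2 * Mbar 0) / Mbar 0 := by
      field_simp; ring
    rw [this]
    positivity
  apply hankel_posDef_of_qf
  intro p0 p1 p2 hp
  have hGp := qf_maxwell_pos (Mbar 0) (Mbar 1 / Mbar 0) _ p0 p1 p2 hM0 hθ hp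
  rw [← hG] at hGp
  have hc : 0 < Δt / τ := by positivity
  have DL : 0 < dLp - dLm := by linarith
  have DR : 0 < dRp - dRm := by linarith
  have cL : 0 ≤ 1 / 2 - lam * (-dLm) := by nlinarith
  have cR : 0 ≤ 1 / 2 - lam * dRp := by nlinarith
  have key : (1 + Δt / τ) * qf p0 p1 p2 Mnew =
      (1 / 2 - lam * (-dLm)) * qf p0 p1 p2 (fun k => 1 * WLp.M k + 0 * WLp.F k)
      + lam * (-dLm) / (dLp - dLm) * qf p0 p1 p2 (fun k => (-dLm) * WLp.M k + 1 * WLp.F k)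
      + lam * dLp / (dLp - dLm) * qf p0 p1 p2 (fun k => (-dLm) * WLm.M k + 1 * WLm.F k)
      + (1 / 2 - lam * dRp) * qf p0 p1 p2 (fun k => 1 * WRm.M k + 0 * WRm.F k)
      + lam * dRp / (dRp - dRm) * qf p0 p1 p2 (fun k => dRp * WRm.M k + (-1) * WRm.F k)
      + lam * (-dRm) / (dRp - dRm) * qf p0 p1 p2 (fun k => dRp * WRp.M k + (-1) * WRp.F k)
      + Δt / τ * qf p0 p1 p2 G := by
    have hk : ∀ k, (1 + Δt / τ) * Mnew k =
      (1 / 2 - lam * (-dLm)) * (1 * WLp.M k + 0 * WLp.F k)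
      + lam * (-dLm) / (dLp - dLm) * ((-dLm) * WLp.M k + 1 * WLp.F k)
      + lam * dLp / (dLp - dLm) * ((-dLm) * WLm.M k + 1 * WLm.F k)
      + (1 / 2 - lam * dRp) * (1 * WRm.M k + 0 * WRm.F k)
      + lam * dRp / (dRp - dRm) * (dRp * WRm.M k + (-1) * WRm.F k)
      + lam * (-dRm) / (dRp - dRm) * (dRp * WRp.M k + (-1) * WRp.F k)
      + Δt / τ * G k := by
      intro k
      rw [hMnew k, hMbar k, hFL, hFR]
      simp only [hllFlux]
      generalize Δt / τ * G k = g
      have DL' := DL.ne'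
      have DR' := DR.ne'
      field_simp
      ring
    simp only [qf]
    linear_combination p0 ^ 2 * hk 0 + 2 * p0 * p1 * hk 1 + (2 * p0 * p2 + p1 ^ 2) * hk 2
      + 2 * p1 * p2 * hk 3 + p2 ^ 2 * hk 4
  have L1' : 0 ≤ -dLm := by linarith
  have R1' : 0 ≤ -dRm := by linarith
  have t1 := mul_nonneg cL (LpM p0 p1 p2)
  have t2 := mul_nonneg (div_nonneg (mul_nonneg hlam.le L1') DL.le) (LpF p0 p1 p2)
  have t3 := mul_nonneg (div_nonneg (mul_nonneg hlam.le L0) DL.le) (LmF p0 p1 p2)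
  have t4 := mul_nonneg cR (RmM p0 p1 p2)
  have t5 := mul_nonneg (div_nonneg (mul_nonneg hlam.le R0) DR.le) (RmF p0 p1 p2)
  have t6 := mul_nonneg (div_nonneg (mul_nonneg hlam.le R1') DR.le) (RpF p0 p1 p2)
  have t7 := mul_pos hc hGp
  have : 0 < (1 + Δt / τ) * qf p0 p1 p2 Mnew := by rw [key]; linarith
  exact pos_of_mul_pos_right this (by positivity)
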